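/- arXiv:1902.07325 — 2 statements merged into one kernel-verified Lean document; each statement's English description precedes it below -/
import Mathlib

section
/- (Intermediate form of Kung's identity) For any hyperplane arrangement 𝒜 in ℝ^n and all s, t ∈ ℝ: χ(𝒜, st) = Σ χ(𝒜^X, s) χ(𝒜^Y, t), where the sum is over all pairs of flats (X, Y) of 𝒜 such that the join X ∨ Y equals ⊤, the join X ∨ Y being the smallest flat containing both X and Y. -/
open Finset MeasureTheory

noncomputable section

namespace CharElts

/-- Ambient Euclidean space `ℝ^n`. -/
abbrev V (n : ℕ) := EuclideanSpace ℝ (Fin n)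

/-- An affine functional on `ℝ^n`; a hyperplane is its zero set. -/
abbrev AffForm (n : ℕ) := V n →ᵃ[ℝ] ℝ

/-- The hyperplane determined by an affine functional. -/
def hypSet {n : ℕ} (ℓ : AffForm n) : Set (V n) := {x | ℓ x = 0}

variable {n : ℕ} (𝒜 : Finset (AffForm n))

/-- Index type for the hyperplanes of the arrangement. -/
abbrev Idx := {ℓ : AffForm n // ℓ ∈ 𝒜}

/-- The (possibly empty) set cut out by a sign vector `σ`. -/
def faceSet (σ : Idx 𝒜 → SignType) : Set (V n) :=
  {x | ∀ ℓ : Idx 𝒜, SignType.sign (ℓ.1 x) = σ ℓ}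

/-- A face of the arrangement: a sign vector whose face set is nonempty. -/
@[ext] structure Face where
  sgn : Idx 𝒜 → SignType
  nonempty : (faceSet 𝒜 sgn).Nonempty

open Classical in
instance : Fintype (Face 𝒜) :=
  Fintype.ofInjective Face.sgn (fun F G h => by cases F; cases G; simpa using h)

/-- The underlying point set of a face. -/
def Face.carrier (F : Face 𝒜) : Set (V n) := faceSet 𝒜 F.sgn

/-- A flat: a nonempty intersection of some subcollection of the hyperplanes
(the empty intersection gives all of `ℝ^n`). -/
def IsFlat (X : Set (V n)) : Prop :=
  X.Nonempty ∧ ∃ P : Idx 𝒜 → Prop, X = ⋂ ℓ ∈ {ℓ : Idx 𝒜 | P ℓ}, hypSet ℓ.1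

/-- The poset of flats, ordered by inclusion. -/
def Flat := {X : Set (V n) // IsFlat 𝒜 X}

instance : PartialOrder (Flat 𝒜) :=
  inferInstanceAs (PartialOrder {X : Set (V n) // IsFlat 𝒜 X})

lemma flat_eq_inter (X : Flat 𝒜) :
    X.1 = ⋂ ℓ ∈ {ℓ : Idx 𝒜 | X.1 ⊆ hypSet ℓ.1}, hypSet ℓ.1 := by
  obtain ⟨Z, hne, P, rfl⟩ := X
  apply subset_antisymm
  · intro x hx
    simp only [Set.mem_iInter, Set.mem_setOf_eq]
    intro ℓ hℓ
    exact hℓ hx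
  · intro x hx
    simp only [Set.mem_iInter, Set.mem_setOf_eq] at hx ⊢
    intro ℓ hℓ
    refine hx ℓ ?_
    intro y hy
    simp only [Set.mem_iInter, Set.mem_setOf_eq] at hy
    exact hy ℓ hℓ

open Classical in
instance : Fintype (Flat 𝒜) :=
  Fintype.ofInjective (fun X : Flat 𝒜 => {ℓ : Idx 𝒜 | X.1 ⊆ hypSet ℓ.1}) <| by
    intro X Y h
    dsimp only at h
    apply Subtype.ext
    rw [flat_eq_inter 𝒜 X, flat_eq_inter 𝒜 Y, h]

/-- The top flat: the whole ambient space. -/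
def topFlat : Flat 𝒜 :=
  ⟨Set.univ, ⟨⟨0, trivial⟩, fun _ => False, by simp⟩⟩

/-- The support of a face: the intersection of the hyperplanes on which it lies. -/
def supp (F : Face 𝒜) : Flat 𝒜 :=
  ⟨⋂ ℓ ∈ {ℓ : Idx 𝒜 | F.sgn ℓ = 0}, hypSet ℓ.1, by
    constructor
    · obtain ⟨x, hx⟩ := F.nonempty
      refine ⟨x, ?_⟩
      simp only [Set.mem_iInter, Set.mem_setOf_eq]
      intro ℓ hℓ
      have h0 := hx ℓ
      rw [hℓ] at h0
      simpa [hypSet, sign_eq_zero_iff] using h0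
    · exact ⟨fun ℓ => F.sgn ℓ = 0, rfl⟩⟩

/-- The dimension of (the affine hull of) a subset of `ℝ^n`. -/
def dimS (X : Set (V n)) : ℕ := Module.finrank ℝ (vectorSpan ℝ X)

open Classical in
/-- An element `w = Σ_F w^F H_F` of the Tits algebra (recorded by its coefficient
vector) is *characteristic of parameter `t`* if for every flat `X`, the sum of the
coefficients of the faces with support contained in `X` equals `t ^ rk X`,
where `rk X = dim X - d` and `d` is the common dimension of the minimal flats. -/
def IsCharacteristic (d : ℕ) (w : Face 𝒜 → ℝ) (t : ℝ) : Prop :=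
  ∀ X : Flat 𝒜,
    (∑ F : Face 𝒜, if (supp 𝒜 F).1 ⊆ X.1 then w F else 0) = t ^ (dimS X.1 - d)

/-- The sign vector of the Tits product `FG` of two faces. -/
def combineSgn {I : Type*} (σ τ : I → SignType) : I → SignType :=
  fun ℓ => if σ ℓ = 0 then τ ℓ else σ ℓ

open Classical in
/-- The product of the Tits algebra, on coefficient vectors:
`(u·v)^C = Σ_{F,G : FG = C} u^F v^G`, extending `H_F · H_G = H_{FG}` bilinearly. -/
def mulT (u v : Face 𝒜 → ℝ) : Face 𝒜 → ℝ :=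
  fun C => ∑ F : Face 𝒜, ∑ G : Face 𝒜,
    if combineSgn F.sgn G.sgn = C.sgn then u F * v G else 0

open Classical in
/-- The basis element `H_F` of the Tits algebra, as a coefficient vector. -/
def unitV (F : Face 𝒜) : Face 𝒜 → ℝ := fun G => if G = F then 1 else 0

/-- A chamber: a face whose sign vector is nowhere zero. -/
def IsChamber (F : Face 𝒜) : Prop := ∀ ℓ : Idx 𝒜, F.sgn ℓ ≠ 0

open Classical in
/-- `IsMoebius 𝒜 μ` states that `μ` is the Möbius function of the poset of
flats of `𝒜` (these conditions determine `μ` uniquely). -/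
def IsMoebius (μ : Flat 𝒜 → Flat 𝒜 → ℝ) : Prop :=
  (∀ X, μ X X = 1) ∧
  (∀ X Y : Flat 𝒜, X < Y →
    (∑ Z : Flat 𝒜, if X ≤ Z ∧ Z ≤ Y then μ X Z else 0) = 0) ∧
  (∀ X Y : Flat 𝒜, ¬ X ≤ Y → μ X Y = 0)

open Classical in
/-- `χ(𝒜^X, t) = Σ_{Y ≤ X} μ(Y, X) t^{rk Y}`: the characteristic polynomial of the
arrangement under the flat `X`.  Taking `X = ⊤` gives the characteristic
polynomial of `𝒜` itself. -/
def charPolyUnder (μ : Flat 𝒜 → Flat 𝒜 → ℝ) (d : ℕ) (X : Flat 𝒜) (t : ℝ) : ℝ :=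
  ∑ Y : Flat 𝒜, if Y ≤ X then μ Y X * t ^ (dimS Y.1 - d) else 0

/-- The space of directions `L = ⋂_{H ∈ 𝒜} dir(H)`: the intersection of the kernels of
the linear parts of the defining functionals. -/
def dirL : Submodule ℝ (V n) := ⨅ ℓ : Idx 𝒜, LinearMap.ker ℓ.1.linear

/-- A face is essentially bounded if its image in `ℝ^n / L` is bounded. -/
def EssBounded (F : Face 𝒜) : Prop :=
  Bornology.IsBounded ((dirL 𝒜).mkQ '' F.carrier)

/-- A hyperplane (zero set of a nonconstant affine functional) is nonempty. -/
lemma hyp_nonempty (ℓ : AffForm n) (h : ℓ.linear ≠ 0) : (hypSet ℓ).Nonempty := by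
  obtain ⟨v, hv⟩ : ∃ v, ℓ.linear v ≠ 0 := by
    by_contra hc
    push_neg at hc
    exact h (LinearMap.ext fun v => hc v)
  refine ⟨((-ℓ 0) / (ℓ.linear v)) • v, ?_⟩
  have hdecomp : ℓ (((-ℓ 0) / (ℓ.linear v)) • v)
      = ℓ.linear (((-ℓ 0) / (ℓ.linear v)) • v) + ℓ 0 := by
    conv_lhs => rw [show ((-ℓ 0) / (ℓ.linear v)) • v = ((-ℓ 0) / (ℓ.linear v)) • v +ᵥ (0 : V n)
      from (add_zero _).symm]
    rw [AffineMap.map_vadd]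
    rfl
  show ℓ _ = 0
  rw [hdecomp, LinearMap.map_smul, smul_eq_mul, div_mul_cancel₀ _ hv, neg_add_cancel]

/-!
Both sides are compared through their sums over lower intervals. Möbius inversion on the poset of
flats says that `X ↦ χ(𝒜^X, t)` is the function whose sum over the flats `X ≤ W` is `t ^ rk W`.
For any two functions `u`, `v` on flats,
`∑_{Z ≤ W} ∑_{X ∨ Y = Z} u X * v Y = (∑_{X ≤ W} u X) * (∑_{Y ≤ W} v Y)`,
because `X ∨ Y ≤ W` holds exactly when `X ≤ W` and `Y ≤ W`. With `u X = χ(𝒜^X, s)` and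
`v Y = χ(𝒜^Y, t)` the right-hand side is `(s * t) ^ rk W`, so inverting once more identifies
`∑_{X ∨ Y = Z} u X * v Y` with `χ(𝒜^Z, s * t)`; the theorem is the case `Z = ⊤`.
-/

section MoebiusInversion

open IncidenceAlgebra

variable {α R : Type*}

lemma eq_mu_of_sum_Icc [Ring R] [PartialOrder α] [LocallyFiniteOrder α] [DecidableEq α]
    {m : IncidenceAlgebra R α}
    (hm : ∀ a b, ∑ x ∈ Icc a b, m a x = if a = b then 1 else 0) : m = mu R := by
  classical
  refine left_inv_eq_right_inv ?_ zeta_mul_mu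
  ext a b
  rw [mul_apply, one_apply, ← hm]
  refine sum_congr rfl fun x hx => ?_
  rw [zeta_of_le (mem_Icc.1 hx).2, mul_one]

lemma sum_Iic_sum_Iic_comm [Preorder α] [LocallyFiniteOrder α] [LocallyFiniteOrderBot α]
    {M : Type*} [AddCommMonoid M] (F : α → α → M) (c : α) :
    ∑ x ∈ Iic c, ∑ y ∈ Iic x, F x y = ∑ y ∈ Iic c, ∑ x ∈ Icc y c, F x y := by
  refine sum_comm' fun x y => ?_
  simp only [mem_Iic, mem_Icc]
  exact ⟨fun ⟨hxc, hyx⟩ => ⟨⟨hyx, hxc⟩, hyx.trans hxc⟩, fun ⟨⟨hyx, hxc⟩, _⟩ => ⟨hxc, hyx⟩⟩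

section PartialOrder

variable [Ring R] [PartialOrder α] [LocallyFiniteOrder α] [LocallyFiniteOrderBot α] [DecidableEq α]

/-- The Möbius transform of `f`: the function whose sum over each lower interval `Iic c` is `f c`.
Intervals `Iic c` are required to be finite, but no least element is. -/
def moebiusTransform (f : α → R) (c : α) : R := ∑ x ∈ Iic c, mu R x c * f x

lemma sum_Iic_moebiusTransform (f : α → R) (c : α) :
    ∑ x ∈ Iic c, moebiusTransform f x = f c := by
  simp_rw [moebiusTransform, sum_Iic_sum_Iic_comm, ← sum_mul, sum_Icc_mu_right]
  simp

lemma moebiusTransform_sum_Iic (f : α → R) (c : α) :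
    moebiusTransform (fun x => ∑ y ∈ Iic x, f y) c = f c := by
  simp_rw [moebiusTransform, mul_sum, sum_Iic_sum_Iic_comm, ← sum_mul, sum_Icc_mu_left]
  simp

end PartialOrder

lemma forall_eq_top_iff_sup_eq_top [SemilatticeSup α] [OrderTop α] {x y : α} :
    (∀ z, x ≤ z → y ≤ z → z = ⊤) ↔ x ⊔ y = ⊤ := by
  simp only [← codisjoint_iff, Codisjoint, top_le_iff]

section SemilatticeSup

variable [SemilatticeSup α] [LocallyFiniteOrderBot α] [DecidableEq α]

lemma sum_Iic_sum_sup_eq [NonUnitalNonAssocSemiring R] (u v : α → R) (c : α) :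
    ∑ z ∈ Iic c, ∑ x ∈ Iic z, ∑ y ∈ Iic z, (if x ⊔ y = z then u x * v y else 0) =
      (∑ x ∈ Iic c, u x) * ∑ y ∈ Iic c, v y := by
  have hfiber : ∀ z ∈ Iic c, {p ∈ Iic z ×ˢ Iic z | p.1 ⊔ p.2 = z} =
      {p ∈ Iic c ×ˢ Iic c | p.1 ⊔ p.2 = z} := by
    intro z hz
    ext ⟨x, y⟩
    simp only [mem_filter, mem_product, mem_Iic, and_congr_left_iff, ← sup_le_iff]
    rintro rfl
    simp [mem_Iic.1 hz]
  calc
    _ = ∑ z ∈ Iic c, ∑ p ∈ Iic c ×ˢ Iic c with p.1 ⊔ p.2 = z, u p.1 * v p.2 := by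
      refine sum_congr rfl fun z hz => ?_
      rw [← sum_product', ← sum_filter, hfiber z hz]
    _ = ∑ p ∈ Iic c ×ˢ Iic c, u p.1 * v p.2 :=
      sum_fiberwise_of_maps_to (fun p hp => by simpa using hp) _
    _ = (∑ x ∈ Iic c, u x) * ∑ y ∈ Iic c, v y := by rw [sum_mul_sum, sum_product]

theorem kung_identity_join_general [Ring R] [LocallyFiniteOrder α] (f g : α → R) (c : α) :
    moebiusTransform (fun w => f w * g w) c = ∑ x ∈ Iic c, ∑ y ∈ Iic c,
      if x ⊔ y = c then moebiusTransform f x * moebiusTransform g y else 0 := by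
  have hfg : (fun w => f w * g w) = fun w => ∑ z ∈ Iic w, ∑ x ∈ Iic z, ∑ y ∈ Iic z,
      if x ⊔ y = z then moebiusTransform f x * moebiusTransform g y else 0 := by
    ext w
    rw [sum_Iic_sum_sup_eq, sum_Iic_moebiusTransform, sum_Iic_moebiusTransform]
  rw [hfg, moebiusTransform_sum_Iic]

end SemilatticeSup

end MoebiusInversion

section Flats

variable {𝒜}

/-- The smallest flat containing a nonempty set `S`, as the intersection of the hyperplanes
containing `S`. That intersection may be empty, hence not a flat, when `S` is. -/
def flatSpan (S : Set (V n)) (hS : S.Nonempty) : Flat 𝒜 :=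
  ⟨⋂ ℓ ∈ {ℓ : Idx 𝒜 | S ⊆ hypSet ℓ.1}, hypSet ℓ.1,
    hS.mono (Set.subset_iInter₂ fun _ hℓ => hℓ), _, rfl⟩

lemma subset_flatSpan (S : Set (V n)) (hS : S.Nonempty) :
    S ⊆ (flatSpan S hS : Flat 𝒜).1 :=
  Set.subset_iInter₂ fun _ hℓ => hℓ

lemma flatSpan_le {S : Set (V n)} (hS : S.Nonempty) {Z : Flat 𝒜} (hSZ : S ⊆ Z.1) :
    flatSpan S hS ≤ Z := by
  change (flatSpan S hS).1 ⊆ Z.1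
  rw [flat_eq_inter 𝒜 Z]
  exact Set.biInter_subset_biInter_left fun _ hℓ => hSZ.trans hℓ

/-- The join of two flats is the flat spanned by their union. -/
instance : SemilatticeSup (Flat 𝒜) where
  sup X Y := flatSpan (X.1 ∪ Y.1) X.2.1.inl
  le_sup_left _ _ := Set.subset_union_left.trans (subset_flatSpan _ _)
  le_sup_right _ _ := Set.subset_union_right.trans (subset_flatSpan _ _)
  sup_le _ _ _ hX hY := flatSpan_le _ (Set.union_subset hX hY)

instance : OrderTop (Flat 𝒜) where
  top := topFlat 𝒜
  le_top _ := Set.subset_univ _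

lemma topFlat_eq_top : topFlat 𝒜 = ⊤ := rfl

open Classical in
instance : LocallyFiniteOrder (Flat 𝒜) := Fintype.toLocallyFiniteOrder

open Classical in
instance : LocallyFiniteOrderBot (Flat 𝒜) :=
  .ofIic _ (fun X => {Y | Y ≤ X}) (by simp)

variable {μ : Flat 𝒜 → Flat 𝒜 → ℝ}

open Classical in
lemma IsMoebius.eq_mu (hμ : IsMoebius 𝒜 μ) (X Y : Flat 𝒜) :
    μ X Y = IncidenceAlgebra.mu ℝ X Y := by
  obtain ⟨hself, hsum, hzero⟩ := hμ
  let m : IncidenceAlgebra ℝ (Flat 𝒜) := ⟨μ, hzero⟩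
  suffices m = IncidenceAlgebra.mu ℝ from congr($this X Y)
  refine eq_mu_of_sum_Icc fun A B => ?_
  change ∑ Z ∈ Icc A B, μ A Z = _
  split_ifs with hAB
  · rw [← hAB, Icc_self, sum_singleton, hself]
  · by_cases hle : A ≤ B
    · rw [← hsum A B (hle.lt_of_ne hAB), ← sum_filter, filter_le_le_eq_Icc]
    · rw [Icc_eq_empty hle, sum_empty]

open Classical in
lemma IsMoebius.charPolyUnder_eq_moebiusTransform (hμ : IsMoebius 𝒜 μ) (d : ℕ) (X : Flat 𝒜)
    (t : ℝ) :
    charPolyUnder 𝒜 μ d X t = moebiusTransform (fun Y : Flat 𝒜 => t ^ (dimS Y.1 - d)) X := by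
  simp_rw [charPolyUnder, moebiusTransform, hμ.eq_mu, ← sum_filter, filter_ge_eq_Iic]

end Flats

open Classical in
/-- **Intermediate form of Kung's identity.**
`χ(𝒜, st) = Σ_{X ∨ Y = ⊤} χ(𝒜^X, s) χ(𝒜^Y, t)`, the sum over pairs of flats whose
join (smallest flat containing both, i.e. whose only common upper bound) is `⊤`. -/
theorem kung_identity_join {n : ℕ} (𝒜 : Finset (AffForm n))
    (h𝒜 : ∀ ℓ ∈ 𝒜, ℓ.linear ≠ 0)
    (d : ℕ) (hd : ∀ X : Flat 𝒜, IsMin X → dimS X.1 = d)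
    (μ : Flat 𝒜 → Flat 𝒜 → ℝ) (hμ : IsMoebius 𝒜 μ)
    (s t : ℝ) :
    charPolyUnder 𝒜 μ d (topFlat 𝒜) (s * t)
      = ∑ X : Flat 𝒜, ∑ Y : Flat 𝒜,
          if (∀ Z : Flat 𝒜, X ≤ Z → Y ≤ Z → Z = topFlat 𝒜) then
            charPolyUnder 𝒜 μ d X s * charPolyUnder 𝒜 μ d Y t
          else 0 := by
  simp_rw [hμ.charPolyUnder_eq_moebiusTransform, topFlat_eq_top, forall_eq_top_iff_sup_eq_top,
    mul_pow]
  simpa only [Iic_top] using kung_identity_join_general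
    (fun W : Flat 𝒜 => s ^ (dimS W.1 - d)) (fun W => t ^ (dimS W.1 - d)) ⊤

end CharElts
end
end

section
/- (Intrinsic element is characteristic) Let 𝒜 be any hyperplane arrangement in ℝ^n, d the common dimension of its minimal flats, and t ∈ ℝ. Then the intrinsic element ν_t = Σ_F (−1)^{dim F} ( Σ_{k=d}^{dim F} (−1)^k v_k(cl F) t^{k−d} ) H_F ∈ ℝΣ[𝒜] is characteristic of parameter t; that is, for every flat X of 𝒜, Σ_{F : supp(F) ⊆ X} (−1)^{dim F} Σ_{k=d}^{dim F} (−1)^k v_k(cl F) t^{k−d} = t^{dim(X) − d}. -/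
open Finset MeasureTheory

noncomputable section

namespace CharElts

variable {n : ℕ} (𝒜 : Finset (AffForm n))

/-- The set of nearest points of `P` to `x`. -/
def nearestPts {n : ℕ} (P : Set (V n)) (x : V n) : Set (V n) :=
  {y ∈ P | ∀ z ∈ P, dist x y ≤ dist x z}

/-- Faces of a polyhedron `P`: `P` itself, or a nonempty subset of the form
`{x ∈ P | ℓ x = sup_P ℓ}` for a linear functional `ℓ` bounded above on `P`. -/
def IsPolyFace {n : ℕ} (P Q : Set (V n)) : Prop :=
  Q = P ∨ (Q.Nonempty ∧ ∃ ℓ : V n →ₗ[ℝ] ℝ, BddAbove (ℓ '' P) ∧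
    Q = {x ∈ P | ℓ x = sSup (ℓ '' P)})

/-- `S_k(P)`: the set of points of `ℝ^n` whose nearest point in `P` lies in the
relative interior of some `k`-dimensional face of `P`. -/
def projSet {n : ℕ} (P : Set (V n)) (k : ℕ) : Set (V n) :=
  {x | ∃ y ∈ nearestPts P x, ∃ Q : Set (V n),
    IsPolyFace P Q ∧ dimS Q = k ∧ y ∈ intrinsicInterior ℝ Q}

/-- `HasIntrinsicVolumes P v` says that for each `k`, the proportion of the volume of
space occupied by `S_k(P)` exists and equals `v k`, i.e.
`v_k(P) = lim_{R→∞} vol(S_k(P) ∩ B(0,R)) / vol(B(0,R))`. -/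
def HasIntrinsicVolumes {n : ℕ} (P : Set (V n)) (v : ℕ → ℝ) : Prop :=
  ∀ k : ℕ, Filter.Tendsto
    (fun R : ℝ =>
      (volume (projSet P k ∩ Metric.ball (0 : V n) R)).toReal /
        (volume (Metric.ball (0 : V n) R)).toReal)
    Filter.atTop (nhds (v k))

/-!
The metric projection `π` onto closed convex sets is a valuation: if `A`, `B` and `A ∪ B` are closed
and convex, then `f (π_{A ∪ B} x) + f (π_{A ∩ B} x) = f (π_A x) + f (π_B x)` for every function `f`.
When a hyperplane cuts a relatively open convex set `C` into three pieces, the piece on the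
hyperplane has one dimension less, so `C ↦ (-1)^{dim C} f (π_{cl C} x)` is additive over the pieces.
Cutting a flat `X` by all hyperplanes of `𝒜` therefore gives
`Σ_{F ⊆ X} (-1)^{dim F} f (π_{cl F} x) = (-1)^{dim X} f (π_X x)`.

Let `f` be the indicator of the union of the `k`-dimensional faces of `𝒜`. A point of `cl F` lies in
the relative interior of a `k`-dimensional face of the polyhedron `cl F` exactly when the face of
`𝒜` containing it has dimension `k`, so `f ∘ π_{cl F}` is the indicator of `S_k(cl F)`. On the other
hand, for almost every `x` the point `π_X x` avoids all hyperplanes not containing `X`, so it lies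
in a face of dimension `dim X`. Averaging over large balls turns the identity into
`Σ_{F ⊆ X} (-1)^{dim F} v_k(cl F) = (-1)^{dim X} δ_{k, dim X}`; multiply by `(-1)^k t^{k-d}` and sum
over `k`.
-/

section NearestPoint

section Metric

variable {E : Type*} [PseudoMetricSpace E] {K L : Set E} {x y : E}

/-- `y` is a point of `K` at minimal distance from `x`: the relation `y ∈ nearestPts K x` in an
arbitrary metric space. -/
def IsNearest (K : Set E) (x y : E) : Prop :=
  y ∈ K ∧ ∀ z ∈ K, dist x y ≤ dist x z

lemma IsNearest.mono (h : IsNearest K x y) (hLK : L ⊆ K) (hy : y ∈ L) : IsNearest L x y :=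
  ⟨hy, fun z hz => h.2 z (hLK hz)⟩

variable [Nonempty E]

/-- The metric projection of `x` onto `K`: a point of `K` nearest to `x`, and an arbitrary point
when there is none. -/
def nearestPt (K : Set E) (x : E) : E := Classical.epsilon (IsNearest K x)

variable [ProperSpace E]

lemma isNearest_nearestPt (hK : IsClosed K) (hne : K.Nonempty) (x : E) :
    IsNearest K x (nearestPt K x) := by
  obtain ⟨y, hy, hxy⟩ := hK.exists_infDist_eq_dist hne x
  exact Classical.epsilon_spec
    (p := IsNearest K x) ⟨y, hy, fun z hz => hxy ▸ Metric.infDist_le_dist_of_mem hz⟩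

lemma nearestPt_mem (hK : IsClosed K) (hne : K.Nonempty) (x : E) : nearestPt K x ∈ K :=
  (isNearest_nearestPt hK hne x).1

end Metric

variable {E : Type*} [NormedAddCommGroup E] [InnerProductSpace ℝ E] {K A B : Set E}
  {x x' y y' : E}

lemma IsNearest.inner_sub_nonpos (hK : Convex ℝ K) (h : IsNearest K x y) {z : E} (hz : z ∈ K) :
    inner ℝ (x - y) (z - y) ≤ 0 := by
  refine (norm_eq_iInf_iff_real_inner_le_zero hK h.1).1 ?_ z hz
  have : Nonempty K := ⟨⟨y, h.1⟩⟩
  refine le_antisymm (le_ciInf fun w => ?_) (ciInf_le ⟨0, ?_⟩ (⟨y, h.1⟩ : K))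
  · simpa only [dist_eq_norm] using h.2 w w.2
  · rintro _ ⟨w, rfl⟩
    exact norm_nonneg _

lemma IsNearest.dist_le_dist (hK : Convex ℝ K) (h : IsNearest K x y) (h' : IsNearest K x' y') :
    dist y y' ≤ dist x x' := by
  have h₁ := h.inner_sub_nonpos hK h'.1
  have h₂ := h'.inner_sub_nonpos hK h.1
  have hsq : ‖y - y'‖ * ‖y - y'‖ ≤ ‖x - x'‖ * ‖y - y'‖ := calc
    ‖y - y'‖ * ‖y - y'‖ = inner ℝ (x - x') (y - y') + inner ℝ (x - y) (y' - y)
        + inner ℝ (x' - y') (y - y') := by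
      rw [← real_inner_self_eq_norm_mul_norm]
      simp only [inner_sub_left, inner_sub_right]
      ring
    _ ≤ inner ℝ (x - x') (y - y') := by linarith
    _ ≤ ‖x - x'‖ * ‖y - y'‖ := real_inner_le_norm _ _
  rw [dist_eq_norm, dist_eq_norm]
  rcases (norm_nonneg (y - y')).eq_or_lt with h0 | hpos
  · exact h0 ▸ norm_nonneg _
  · exact le_of_mul_le_mul_right hsq hpos

lemma IsNearest.unique (hK : Convex ℝ K) (h : IsNearest K x y) (h' : IsNearest K x y') : y = y' :=
  dist_le_zero.1 ((h.dist_le_dist hK h').trans_eq (dist_self x))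

lemma IsNearest.nearestPt_eq (hK : Convex ℝ K) (h : IsNearest K x y) : nearestPt K x = y :=
  IsNearest.unique hK (Classical.epsilon_spec ⟨y, h⟩) h

lemma IsNearest.inter_of_union (hA : IsClosed A) (hB : IsClosed B) (hBc : Convex ℝ B)
    (hAB : Convex ℝ (A ∪ B)) (hy : IsNearest (A ∪ B) x y) (hyA : y ∈ A)
    (hy' : IsNearest B x y') : IsNearest (A ∩ B) x y' := by
  obtain ⟨w, hws, hwA, hwB⟩ : (segment ℝ y' y ∩ (A ∩ B)).Nonempty :=
    isPreconnected_closed_iff.1 (convex_segment y' y).isPreconnected A B hA hB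
      (hAB.segment_subset (Or.inr hy'.1) (Or.inl hyA)) ⟨y, right_mem_segment ℝ y' y, hyA⟩
      ⟨y', left_mem_segment ℝ y' y, hy'.1⟩
  have hxw : dist x w ≤ dist x y' := by
    have hball := (convex_closedBall x (dist x y')).segment_subset
      (Metric.mem_closedBall'.2 le_rfl) (Metric.mem_closedBall'.2 (hy.2 y' (Or.inr hy'.1)))
    exact Metric.mem_closedBall'.1 (hball hws)
  have hw : IsNearest B x w := ⟨hwB, fun z hz => hxw.trans (hy'.2 z hz)⟩
  obtain rfl := hw.unique hBc hy'
  exact hy'.mono Set.inter_subset_right ⟨hwA, hwB⟩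

variable [ProperSpace E]

lemma continuous_nearestPt (hKc : Convex ℝ K) (hK : IsClosed K) (hne : K.Nonempty) :
    Continuous (nearestPt K) :=
  (LipschitzWith.of_dist_le_mul (K := 1) fun x x' => by
    simpa using (isNearest_nearestPt hK hne x).dist_le_dist hKc
      (isNearest_nearestPt hK hne x')).continuous

lemma apply_nearestPt_union_add_inter {M : Type*} [AddCommMonoid M] (f : E → M)
    (hA : IsClosed A) (hB : IsClosed B) (hAc : Convex ℝ A) (hBc : Convex ℝ B)
    (hAne : A.Nonempty) (hBne : B.Nonempty) (hAB : Convex ℝ (A ∪ B)) (x : E) :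
    f (nearestPt (A ∪ B) x) + f (nearestPt (A ∩ B) x)
      = f (nearestPt A x) + f (nearestPt B x) := by
  wlog hyA : nearestPt (A ∪ B) x ∈ A generalizing A B
  · have hyB := (nearestPt_mem (hA.union hB) (hAne.mono Set.subset_union_left) x).resolve_left hyA
    rw [Set.union_comm] at hAB hyB ⊢
    rw [Set.inter_comm, this hB hA hBc hAc hBne hAne hAB hyB, add_comm]
  have hy := isNearest_nearestPt (hA.union hB) (hAne.mono Set.subset_union_left) x
  have hy' := isNearest_nearestPt hB hBne x
  rw [(hy.mono Set.subset_union_left hyA).nearestPt_eq hAc,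
    (hy.inter_of_union hA hB hBc hAB hyA hy').nearestPt_eq (hAc.inter hBc)]

end NearestPoint

section SignSets

variable {E : Type*} [AddCommGroup E] [Module ℝ E] {a : E →ᵃ[ℝ] ℝ} {s : SignType}
  {y z : E}

/-- The hyperplane `a = 0` or the open half-space `± a > 0`, according to the sign `s`. -/
def signSet (a : E →ᵃ[ℝ] ℝ) (s : SignType) : Set E := {z | SignType.sign (a z) = s}

/-- The closed counterpart of `signSet a s`: the hyperplane or closed half-space on which `a` is
zero or has sign `s`. -/
def weakSignSet (a : E →ᵃ[ℝ] ℝ) (s : SignType) : Set E :=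
  {z | SignType.sign (a z) = 0 ∨ SignType.sign (a z) = s}

/-- The zero locus of an affine functional, as an affine subspace (possibly empty). -/
def zeroLocus (a : E →ᵃ[ℝ] ℝ) : AffineSubspace ℝ E := (AffineSubspace.mk' (0 : ℝ) ⊥).comap a

lemma mem_zeroLocus : z ∈ zeroLocus a ↔ a z = 0 := by
  simp [zeroLocus, AffineSubspace.mem_comap]

lemma direction_zeroLocus (hz : a z = 0) : (zeroLocus a).direction = LinearMap.ker a.linear := by
  ext v
  rw [← AffineSubspace.vadd_mem_iff_mem_direction v (mem_zeroLocus.2 hz), mem_zeroLocus,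
    AffineMap.map_vadd, hz, vadd_eq_add, add_zero, LinearMap.mem_ker]

lemma signSet_subset_weakSignSet (a : E →ᵃ[ℝ] ℝ) (s : SignType) : signSet a s ⊆ weakSignSet a s :=
  fun _ => Or.inr

lemma signSet_zero (a : E →ᵃ[ℝ] ℝ) : signSet a 0 = zeroLocus a :=
  Set.ext fun _ => sign_eq_zero_iff.trans mem_zeroLocus.symm

lemma signSet_one (a : E →ᵃ[ℝ] ℝ) : signSet a 1 = a ⁻¹' Set.Ioi 0 :=
  Set.ext fun _ => sign_eq_one_iff

lemma signSet_neg_one (a : E →ᵃ[ℝ] ℝ) : signSet a (-1) = a ⁻¹' Set.Iio 0 :=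
  Set.ext fun _ => sign_eq_neg_one_iff

lemma weakSignSet_zero (a : E →ᵃ[ℝ] ℝ) : weakSignSet a 0 = zeroLocus a :=
  (Set.ext fun _ => or_self_iff : weakSignSet a 0 = signSet a 0).trans (signSet_zero a)

lemma weakSignSet_one (a : E →ᵃ[ℝ] ℝ) : weakSignSet a 1 = a ⁻¹' Set.Ici 0 := by
  ext z
  rw [Set.mem_preimage, Set.mem_Ici, le_iff_eq_or_lt, eq_comm]
  exact or_congr sign_eq_zero_iff sign_eq_one_iff

lemma weakSignSet_neg_one (a : E →ᵃ[ℝ] ℝ) : weakSignSet a (-1) = a ⁻¹' Set.Iic 0 := by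
  ext z
  rw [Set.mem_preimage, Set.mem_Iic, le_iff_eq_or_lt]
  exact or_congr sign_eq_zero_iff sign_eq_neg_one_iff

lemma weakSignSet_one_union (a : E →ᵃ[ℝ] ℝ) : weakSignSet a 1 ∪ weakSignSet a (-1) = Set.univ := by
  rw [weakSignSet_one, weakSignSet_neg_one, ← Set.preimage_union, Set.union_comm, Set.Iic_union_Ici,
    Set.preimage_univ]

lemma weakSignSet_one_inter (a : E →ᵃ[ℝ] ℝ) :
    weakSignSet a 1 ∩ weakSignSet a (-1) = weakSignSet a 0 := by
  ext z
  rw [weakSignSet_one, weakSignSet_neg_one, ← Set.preimage_inter, Set.Ici_inter_Iic, Set.Icc_self,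
    weakSignSet_zero]
  exact mem_zeroLocus.symm

lemma convex_signSet (a : E →ᵃ[ℝ] ℝ) : ∀ s, Convex ℝ (signSet a s)
  | 0 => signSet_zero a ▸ (zeroLocus a).convex
  | 1 => signSet_one a ▸ (convex_Ioi 0).affine_preimage a
  | -1 => signSet_neg_one a ▸ (convex_Iio 0).affine_preimage a

lemma inter_signSet_zero (A : AffineSubspace ℝ E) (U : Set E) (a : E →ᵃ[ℝ] ℝ) :
    ↑A ∩ U ∩ signSet a 0 = ↑(A ⊓ zeroLocus a) ∩ U := by
  rw [signSet_zero, Set.inter_right_comm]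
  rfl

lemma apply_mem_openSegment (a : E →ᵃ[ℝ] ℝ) {w : E} (h : w ∈ openSegment ℝ y z) :
    a w ∈ openSegment ℝ (a y) (a z) :=
  image_openSegment ℝ a y z ▸ Set.mem_image_of_mem a h

lemma openSegment_subset_signSet (hy : y ∈ weakSignSet a s) (hz : z ∈ signSet a s) :
    openSegment ℝ y z ⊆ signSet a s := by
  intro w hw
  obtain ⟨p, q, hp, hq, -, hpq⟩ := apply_mem_openSegment a hw
  cases s with
  | zero =>
    rw [SignType.zero_eq_zero, signSet_zero, SetLike.mem_coe, mem_zeroLocus] at *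
    rw [weakSignSet_zero, SetLike.mem_coe, mem_zeroLocus] at hy
    simp [← hpq, hy, hz]
  | pos =>
    rw [SignType.pos_eq_one, signSet_one, Set.mem_preimage, Set.mem_Ioi] at *
    rw [weakSignSet_one, Set.mem_preimage, Set.mem_Ici] at hy
    rw [← hpq, smul_eq_mul, smul_eq_mul]
    positivity
  | neg =>
    rw [SignType.neg_eq_neg_one, signSet_neg_one, Set.mem_preimage, Set.mem_Iio] at *
    rw [weakSignSet_neg_one, Set.mem_preimage, Set.mem_Iic] at hy
    rw [← hpq, smul_eq_mul, smul_eq_mul]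
    nlinarith

lemma mem_signSet_neg_of_mem_openSegment {w : E} (hw : a w = 0) (h : w ∈ openSegment ℝ y z)
    (hy : y ∈ signSet a s) : z ∈ signSet a (-s) := by
  obtain ⟨p, q, hp, hq, -, hpq⟩ := apply_mem_openSegment a h
  have hy : SignType.sign (a y) = s := hy
  have hz : a z = -(p / q) * a y := by
    rw [hw, smul_eq_mul, smul_eq_mul] at hpq
    field_simp
    linarith
  rw [signSet, Set.mem_ofPred_eq, hz, sign_mul, Left.sign_neg, sign_pos (div_pos hp hq), hy,
    neg_one_mul]

lemma finrank_inf_ker_add_one [FiniteDimensional ℝ E] {W : Submodule ℝ E} {L : E →ₗ[ℝ] ℝ}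
    (h : ¬W ≤ LinearMap.ker L) :
    Module.finrank ℝ ↥(W ⊓ LinearMap.ker L) + 1 = Module.finrank ℝ W := by
  have hL : L.comp W.subtype ≠ 0 := fun h0 => h fun w hw => LinearMap.congr_fun h0 ⟨w, hw⟩
  rw [← Submodule.map_comap_subtype, Submodule.finrank_map_subtype_eq, ← LinearMap.ker_comp]
  exact Module.Dual.finrank_ker_add_one_of_ne_zero hL

end SignSets

section RelOpen

variable {E : Type*} [NormedAddCommGroup E] [NormedSpace ℝ E] {A : AffineSubspace ℝ E}
  {C Q U : Set E} {y z : E}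

lemma vectorSpan_eq_direction_of_inter_subset (hU : IsOpen U) (hne : (↑A ∩ U).Nonempty)
    (h₁ : ↑A ∩ U ⊆ Q) (h₂ : Q ⊆ A) : vectorSpan ℝ Q = A.direction := by
  refine le_antisymm (A.direction_eq_vectorSpan ▸ vectorSpan_mono ℝ h₂) fun v hv => ?_
  obtain ⟨y, hyA, hyU⟩ := hne
  have hcont : Continuous fun e : ℝ => e • v + y := by fun_prop
  have hev : ∀ᶠ e : ℝ in nhdsWithin 0 {0}ᶜ, e • v + y ∈ U :=
    nhdsWithin_le_nhds ((hU.preimage hcont).mem_nhds (by simpa using hyU))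
  obtain ⟨e, heU, he⟩ := (hev.and self_mem_nhdsWithin).exists
  have heA : e • v + y ∈ A :=
    AffineSubspace.vadd_mem_of_mem_direction (A.direction.smul_mem e hv) hyA
  have hmem := vsub_mem_vectorSpan ℝ (h₁ ⟨heA, heU⟩) (h₁ ⟨hyA, hyU⟩)
  rwa [vsub_eq_sub, add_sub_cancel_right, Submodule.smul_mem_iff _ he] at hmem

lemma inter_subset_intrinsicInterior (hU : IsOpen U) (h₁ : ↑A ∩ U ⊆ Q) (h₂ : Q ⊆ A) :
    ↑A ∩ U ⊆ intrinsicInterior ℝ Q := by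
  intro y hy
  have hsub : ((↑) ⁻¹' U : Set (affineSpan ℝ Q)) ⊆ (↑) ⁻¹' Q :=
    fun z hz => h₁ ⟨affineSpan_le.2 h₂ z.2, hz⟩
  exact mem_intrinsicInterior.2 ⟨⟨y, subset_affineSpan ℝ Q (h₁ hy)⟩,
    interior_maximal hsub (hU.preimage continuous_subtype_val) hy.2, rfl⟩

lemma exists_mem_openSegment_of_mem_intrinsicInterior (hy : y ∈ intrinsicInterior ℝ Q)
    (hz : z ∈ Q) : ∃ w ∈ Q, y ∈ openSegment ℝ z w := by
  obtain ⟨⟨y, hyA⟩, hyQ, rfl⟩ := mem_intrinsicInterior.1 hy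
  have hline (e : ℝ) : AffineMap.lineMap y z (-e) ∈ affineSpan ℝ Q :=
    AffineMap.lineMap_mem _ hyA (subset_affineSpan ℝ Q hz)
  let γ : ℝ → affineSpan ℝ Q := fun e => ⟨AffineMap.lineMap y z (-e), hline e⟩
  have hγ : Continuous γ := by
    refine Continuous.subtype_mk ?_ hline
    simp only [AffineMap.lineMap_apply]
    fun_prop
  have hγ0 : γ 0 = ⟨y, hyA⟩ := Subtype.ext (by simp [γ])
  have hev : ∀ᶠ e in nhdsWithin 0 (Set.Ioi 0), (γ e : E) ∈ Q :=
    nhdsWithin_le_nhds (hγ.continuousAt (hγ0 ▸ mem_interior_iff_mem_nhds.1 hyQ))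
  obtain ⟨e, heQ, he⟩ := (hev.and self_mem_nhdsWithin).exists
  have he' : 0 < 1 + e := add_pos one_pos he
  refine ⟨_, heQ, e / (1 + e), 1 / (1 + e), div_pos he he', div_pos one_pos he',
    by field_simp; ring, ?_⟩
  simp only [γ, AffineMap.lineMap_apply_module]
  match_scalars <;> field_simp <;> ring

/-- Relatively open convex sets, encoded as the intersections of an affine subspace with an open
convex set. The faces and the flats of an arrangement are of this kind. -/
def IsRelOpenConvex (C : Set E) : Prop :=
  ∃ (A : AffineSubspace ℝ E) (U : Set E), IsOpen U ∧ Convex ℝ U ∧ C = ↑A ∩ U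

lemma isRelOpenConvex_coe (A : AffineSubspace ℝ E) : IsRelOpenConvex (A : Set E) :=
  ⟨A, Set.univ, isOpen_univ, convex_univ, (Set.inter_univ _).symm⟩

lemma IsRelOpenConvex.convex (hC : IsRelOpenConvex C) : Convex ℝ C := by
  obtain ⟨A, U, -, hU, rfl⟩ := hC
  exact A.convex.inter hU

lemma IsRelOpenConvex.exists_mem_openSegment (hC : IsRelOpenConvex C) (hy : y ∈ C) (hz : z ∈ C) :
    ∃ w ∈ C, y ∈ openSegment ℝ z w := by
  obtain ⟨A, U, hU, -, rfl⟩ := hC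
  exact exists_mem_openSegment_of_mem_intrinsicInterior
    (inter_subset_intrinsicInterior hU subset_rfl Set.inter_subset_left hy) hz

variable [FiniteDimensional ℝ E] {ι : Type*} {a : E →ᵃ[ℝ] ℝ} {s : SignType}

lemma IsRelOpenConvex.openSegment_subset (hC : IsRelOpenConvex C) (hz : z ∈ closure C)
    (hy : y ∈ C) : openSegment ℝ z y ⊆ C := by
  obtain ⟨A, U, hU, hUc, rfl⟩ := hC
  have hzA : z ∈ A :=
    closure_minimal Set.inter_subset_left A.closed_of_finiteDimensional hz
  have hzU : z ∈ closure U := closure_mono Set.inter_subset_right hz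
  refine Set.subset_inter (A.convex.openSegment_subset hzA hy.1) ?_
  simpa only [hU.interior_eq] using
    hUc.openSegment_closure_interior_subset_interior hzU (by simpa only [hU.interior_eq] using hy.2)

lemma isOpen_signSet (a : E →ᵃ[ℝ] ℝ) (hs : s ≠ 0) : IsOpen (signSet a s) := by
  have ha := a.continuous_of_finiteDimensional
  match s with
  | 0 => exact absurd rfl hs
  | 1 => exact signSet_one a ▸ isOpen_Ioi.preimage ha
  | -1 => exact signSet_neg_one a ▸ isOpen_Iio.preimage ha

lemma isClosed_weakSignSet (a : E →ᵃ[ℝ] ℝ) (s : SignType) : IsClosed (weakSignSet a s) := by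
  have ha := a.continuous_of_finiteDimensional
  match s with
  | 0 => exact weakSignSet_zero a ▸ (zeroLocus a).closed_of_finiteDimensional
  | 1 => exact weakSignSet_one a ▸ isClosed_Ici.preimage ha
  | -1 => exact weakSignSet_neg_one a ▸ isClosed_Iic.preimage ha

lemma IsRelOpenConvex.inter_signSet (hC : IsRelOpenConvex C) (a : E →ᵃ[ℝ] ℝ) (s : SignType) :
    IsRelOpenConvex (C ∩ signSet a s) := by
  obtain ⟨A, U, hU, hUc, rfl⟩ := hC
  rcases eq_or_ne s 0 with rfl | hs
  · exact ⟨A ⊓ zeroLocus a, U, hU, hUc, inter_signSet_zero A U a⟩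
  · exact ⟨A, U ∩ signSet a s, hU.inter (isOpen_signSet a hs), hUc.inter (convex_signSet a s),
      Set.inter_assoc _ _ _⟩

lemma IsRelOpenConvex.closure_inter_iInter_signSet (hC : IsRelOpenConvex C)
    (a : ι → E →ᵃ[ℝ] ℝ) (σ : ι → SignType) (hne : (C ∩ ⋂ i, signSet (a i) (σ i)).Nonempty) :
    closure (C ∩ ⋂ i, signSet (a i) (σ i)) = closure C ∩ ⋂ i, weakSignSet (a i) (σ i) := by
  refine subset_antisymm (closure_minimal ?_ ?_) ?_
  · exact Set.inter_subset_inter subset_closure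
      (Set.iInter_mono fun i => signSet_subset_weakSignSet (a i) (σ i))
  · exact isClosed_closure.inter (isClosed_iInter fun i => isClosed_weakSignSet (a i) (σ i))
  · rintro z ⟨hzC, hz⟩
    obtain ⟨c, hcC, hc⟩ := hne
    have hseg : openSegment ℝ z c ⊆ C ∩ ⋂ i, signSet (a i) (σ i) :=
      Set.subset_inter (hC.openSegment_subset hzC hcC) <| Set.subset_iInter fun i =>
        openSegment_subset_signSet (Set.mem_iInter.1 hz i) (Set.mem_iInter.1 hc i)
    exact closure_mono hseg (segment_subset_closure_openSegment (left_mem_segment ℝ z c))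

lemma IsRelOpenConvex.closure_inter_signSet (hC : IsRelOpenConvex C)
    (hne : (C ∩ signSet a s).Nonempty) :
    closure (C ∩ signSet a s) = closure C ∩ weakSignSet a s := by
  simpa only [Set.iInter_const] using hC.closure_inter_iInter_signSet (fun _ : Unit => a)
    (fun _ => s) (by simpa only [Set.iInter_const] using hne)

lemma IsRelOpenConvex.subset_signSet_or_nonempty (hC : IsRelOpenConvex C) (a : E →ᵃ[ℝ] ℝ) :
    (∃ s, C ⊆ signSet a s) ∨ ∀ s, (C ∩ signSet a s).Nonempty := by
  rcases (C ∩ signSet a 0).eq_empty_or_nonempty with h0 | ⟨z, hzC, hz⟩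
  · have hcover : C ⊆ signSet a 1 ∪ signSet a (-1) := by
      intro y hy
      rcases SignType.trichotomy (SignType.sign (a y)) with h | h | h
      · exact Or.inr h
      · exact (h0.subset ⟨hy, h⟩).elim
      · exact Or.inl h
    have hdisj : Disjoint (signSet a 1) (signSet a (-1)) :=
      Set.disjoint_left.2 fun y h h' => absurd (h.symm.trans h') (by decide)
    exact Or.inl <| (hC.convex.isPreconnected.subset_or_subset (isOpen_signSet a (by decide))
      (isOpen_signSet a (by decide)) hdisj hcover).elim (fun h => ⟨1, h⟩) fun h => ⟨-1, h⟩
  · refine or_iff_not_imp_left.2 fun hC' s => ?_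
    obtain ⟨y, hyC, hy⟩ := Set.not_subset.1 fun h => hC' ⟨0, h⟩
    obtain ⟨w, hwC, hw⟩ := hC.exists_mem_openSegment hzC hyC
    have hw' : w ∈ signSet a (-SignType.sign (a y)) :=
      mem_signSet_neg_of_mem_openSegment (sign_eq_zero_iff.1 hz) hw rfl
    obtain rfl | rfl | rfl : s = 0 ∨ s = SignType.sign (a y) ∨ s = -SignType.sign (a y) := by
      have hy' : SignType.sign (a y) ≠ 0 := hy
      revert hy'
      generalize SignType.sign (a y) = t
      decide +revert
    exacts [⟨z, hzC, hz⟩, ⟨y, hyC, rfl⟩, ⟨w, hwC, hw'⟩]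

lemma IsRelOpenConvex.finrank_inter_signSet (hC : IsRelOpenConvex C)
    (hs : s ≠ 0) (hne : (C ∩ signSet a s).Nonempty) :
    Module.finrank ℝ (vectorSpan ℝ (C ∩ signSet a s)) = Module.finrank ℝ (vectorSpan ℝ C) := by
  obtain ⟨A, U, hU, -, rfl⟩ := hC
  rw [vectorSpan_eq_direction_of_inter_subset hU hne.left subset_rfl Set.inter_subset_left]
  rw [Set.inter_assoc] at hne ⊢
  rw [vectorSpan_eq_direction_of_inter_subset (hU.inter (isOpen_signSet a hs)) hne subset_rfl
    Set.inter_subset_left]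

lemma IsRelOpenConvex.finrank_inter_signSet_zero (hC : IsRelOpenConvex C)
    (hne : (C ∩ signSet a 0).Nonempty) (hne' : ¬ C ⊆ signSet a 0) :
    Module.finrank ℝ (vectorSpan ℝ (C ∩ signSet a 0)) + 1 = Module.finrank ℝ (vectorSpan ℝ C) := by
  obtain ⟨A, U, hU, -, rfl⟩ := hC
  obtain ⟨z, ⟨hzA, hzU⟩, hz⟩ := hne
  obtain ⟨y, ⟨hyA, hyU⟩, hy⟩ := Set.not_subset.1 hne'
  rw [signSet_zero] at hz hy
  rw [inter_signSet_zero,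
    vectorSpan_eq_direction_of_inter_subset (A := A ⊓ zeroLocus a) hU ⟨z, ⟨hzA, hz⟩, hzU⟩ subset_rfl
      Set.inter_subset_left,
    vectorSpan_eq_direction_of_inter_subset hU ⟨z, hzA, hzU⟩ subset_rfl Set.inter_subset_left,
    AffineSubspace.direction_inf_of_mem hzA hz, direction_zeroLocus (mem_zeroLocus.1 hz)]
  refine finrank_inf_ker_add_one fun hle => hy (mem_zeroLocus.2 ?_)
  have hker := hle (AffineSubspace.vsub_mem_direction hyA hzA)
  rwa [LinearMap.mem_ker, AffineMap.linearMap_vsub, mem_zeroLocus.1 hz, vsub_eq_sub, sub_zero]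
    at hker

end RelOpen

section SignedProjection

variable {E R : Type*} [NormedAddCommGroup E] [InnerProductSpace ℝ E] [CommRing R] {C : Set E}

open Classical in
/-- The dimension-signed value of `f` at the projection of `x` onto the closure of `C`, with value
`0` on the empty set. As a function of the relatively open convex set `C` it is finitely additive,
and summing it over the faces contained in a flat is what produces the Euler-type relation between
intrinsic volumes. -/
def signedProj (f : E → R) (x : E) (C : Set E) : R :=
  if C.Nonempty then (-1) ^ Module.finrank ℝ (vectorSpan ℝ C) * f (nearestPt (closure C) x) else 0

lemma signedProj_empty (f : E → R) (x : E) : signedProj f x ∅ = 0 :=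
  if_neg Set.not_nonempty_empty

lemma signedProj_of_nonempty (f : E → R) (x : E) (hC : C.Nonempty) :
    signedProj f x C
      = (-1) ^ Module.finrank ℝ (vectorSpan ℝ C) * f (nearestPt (closure C) x) :=
  if_pos hC

variable [FiniteDimensional ℝ E]

lemma IsRelOpenConvex.apply_nearestPt_closure {a : E →ᵃ[ℝ] ℝ} (hC : IsRelOpenConvex C)
    (hne : ∀ s, (C ∩ signSet a s).Nonempty) (f : E → R) (x : E) :
    f (nearestPt (closure C) x) + f (nearestPt (closure (C ∩ signSet a 0)) x)
      = f (nearestPt (closure (C ∩ signSet a 1)) x)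
        + f (nearestPt (closure (C ∩ signSet a (-1))) x) := by
  have hunion : closure (C ∩ signSet a 1) ∪ closure (C ∩ signSet a (-1)) = closure C := by
    rw [hC.closure_inter_signSet (hne 1), hC.closure_inter_signSet (hne (-1)),
      ← Set.inter_union_distrib_left, weakSignSet_one_union, Set.inter_univ]
  have hinter : closure (C ∩ signSet a 1) ∩ closure (C ∩ signSet a (-1))
      = closure (C ∩ signSet a 0) := by
    rw [hC.closure_inter_signSet (hne 1), hC.closure_inter_signSet (hne (-1)),
      hC.closure_inter_signSet (hne 0), ← Set.inter_inter_distrib_left, weakSignSet_one_inter]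
  have h := apply_nearestPt_union_add_inter f isClosed_closure isClosed_closure
    (hC.inter_signSet a 1).convex.closure (hC.inter_signSet a (-1)).convex.closure
    (hne 1).closure (hne (-1)).closure (hunion ▸ hC.convex.closure) x
  rwa [hunion, hinter] at h

lemma IsRelOpenConvex.signedProj_eq_sum_signSet (hC : IsRelOpenConvex C) (a : E →ᵃ[ℝ] ℝ)
    (f : E → R) (x : E) : signedProj f x C = ∑ s, signedProj f x (C ∩ signSet a s) := by
  rcases hC.subset_signSet_or_nonempty a with ⟨s, hs⟩ | hne
  · rw [Fintype.sum_eq_single s, Set.inter_eq_left.2 hs]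
    intro s' hs'
    have hempty : C ∩ signSet a s' = ∅ :=
      Set.eq_empty_of_forall_notMem fun y hy => hs' (hy.2.symm.trans (hs hy.1))
    rw [hempty, signedProj_empty]
  · have hdim : Module.finrank ℝ (vectorSpan ℝ C)
        = Module.finrank ℝ (vectorSpan ℝ (C ∩ signSet a 0)) + 1 := by
      refine (hC.finrank_inter_signSet_zero (hne 0) fun h0 => ?_).symm
      obtain ⟨y, hyC, hy⟩ := hne 1
      exact absurd ((h0 hyC).symm.trans hy) (by decide)
    rw [SignType.univ_eq, Finset.sum_insert (by decide), Finset.sum_pair (by decide),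
      signedProj_of_nonempty f x ((hne 0).mono Set.inter_subset_left),
      signedProj_of_nonempty f x (hne 0), signedProj_of_nonempty f x (hne 1),
      signedProj_of_nonempty f x (hne (-1)), hC.finrank_inter_signSet (by decide) (hne 1),
      hC.finrank_inter_signSet (by decide) (hne (-1)), hdim, pow_succ]
    linear_combination
      -(-1) ^ Module.finrank ℝ (vectorSpan ℝ (C ∩ signSet a 0)) * hC.apply_nearestPt_closure hne f x

lemma IsRelOpenConvex.signedProj_eq_sum_iInter_signSet {ι : Type*} [Finite ι]
    [hι : Fintype (ι → SignType)] (hC : IsRelOpenConvex C) (a : ι → E →ᵃ[ℝ] ℝ) (f : E → R) (x : E) :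
    signedProj f x C = ∑ σ : ι → SignType, signedProj f x (C ∩ ⋂ i, signSet (a i) (σ i)) := by
  induction ι using Finite.induction_empty_option generalizing C hι with
  | of_equiv e ih =>
    have := Fintype.ofEquiv _ (e.arrowCongr (Equiv.refl SignType)).symm
    rw [ih hC (a ∘ e)]
    refine Fintype.sum_equiv (e.arrowCongr (Equiv.refl _)) _ _ fun σ => ?_
    congr 2
    exact e.iInf_congr fun i => by simp
  | h_empty => simp
  | h_option ih =>
    classical
    rw [hC.signedProj_eq_sum_signSet (a none), Fintype.sum_equiv Equiv.piOptionEquivProd _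
      (fun q => signedProj f x (C ∩ signSet (a none) q.1 ∩
        ⋂ i, signSet (a (some i)) (q.2 i))), Fintype.sum_prod_type]
    · exact Finset.sum_congr rfl fun s _ =>
        ih (hC.inter_signSet (a none) s) fun i => a (some i)
    · intro σ
      rw [Set.inter_assoc, Set.iInter_option]
      rfl

end SignedProjection

section Exposed

variable {E : Type*} [NormedAddCommGroup E] [NormedSpace ℝ E] [FiniteDimensional ℝ E] {P : Set E}
  {a : E →ᵃ[ℝ] ℝ} {s : SignType}

lemma isExposed_inter_zeroLocus (h : ∀ z ∈ P, 0 ≤ a z) : IsExposed ℝ P (P ∩ zeroLocus a) := by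
  rintro ⟨y, hyP, hy⟩
  have hy : a y = 0 := mem_zeroLocus.1 hy
  refine ⟨-LinearMap.toContinuousLinearMap a.linear, ?_⟩
  have hlin (z w : E) : (-LinearMap.toContinuousLinearMap a.linear) z
      ≤ (-LinearMap.toContinuousLinearMap a.linear) w ↔ a w ≤ a z := by
    have hzw := a.linearMap_vsub w z
    simp only [vsub_eq_sub, map_sub] at hzw
    simp only [neg_apply, LinearMap.coe_toContinuousLinearMap', neg_le_neg_iff]
    constructor <;> intro <;> linarith
  ext z
  simp only [Set.mem_inter_iff, SetLike.mem_coe, mem_zeroLocus, Set.mem_ofPred_eq, hlin]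
  exact and_congr_right fun hz =>
    ⟨fun h0 w hw => h0 ▸ h w hw, fun hmin => le_antisymm (hy ▸ hmin y hyP) (h z hz)⟩

lemma isExposed_inter_zeroLocus_of_subset_weakSignSet (h : P ⊆ weakSignSet a s) :
    IsExposed ℝ P (P ∩ zeroLocus a) := by
  match s with
  | 0 =>
    rw [weakSignSet_zero] at h
    exact (Set.inter_eq_left.2 h).symm ▸ IsExposed.refl P
  | 1 =>
    rw [weakSignSet_one] at h
    exact isExposed_inter_zeroLocus h
  | -1 =>
    rw [weakSignSet_neg_one] at h
    have hneg : zeroLocus (-a) = zeroLocus a := by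
      ext z
      rw [mem_zeroLocus, mem_zeroLocus, AffineMap.coe_neg, Pi.neg_apply, neg_eq_zero]
    exact hneg ▸ isExposed_inter_zeroLocus (a := -a) fun z hz => neg_nonneg.2 (h hz)

lemma isPolyFace_iff_isExposed {P Q : Set (V n)} (hQ : Q.Nonempty) :
    IsPolyFace P Q ↔ IsExposed ℝ P Q := by
  have hsup {ℓ : V n →ₗ[ℝ] ℝ} {x : V n} (hx : x ∈ P) (hmax : ∀ y ∈ P, ℓ y ≤ ℓ x) :
      IsGreatest (ℓ '' P) (ℓ x) := ⟨Set.mem_image_of_mem ℓ hx, Set.forall_mem_image.2 hmax⟩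
  constructor
  · rintro (rfl | ⟨-, ℓ, hbdd, rfl⟩)
    · exact IsExposed.refl Q
    · refine fun _ => ⟨LinearMap.toContinuousLinearMap ℓ, Set.ext fun x => and_congr_right fun hx =>
        ⟨fun h y hy => ?_, fun h => (hsup hx h).csSup_eq.symm⟩⟩
      exact (le_csSup hbdd (Set.mem_image_of_mem ℓ hy)).trans_eq h.symm
  · intro h
    obtain ⟨l, rfl⟩ := h hQ
    obtain ⟨x, hxP, hx⟩ := id hQ
    have hg := hsup (ℓ := (l : V n →ₗ[ℝ] ℝ)) hxP hx
    refine Or.inr ⟨hQ, l, hg.bddAbove, Set.ext fun y => and_congr_right fun hy => ?_⟩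
    rw [hg.csSup_eq]
    exact ⟨fun h' => le_antisymm (hx y hy) (h' x hxP), fun h' z hz => (hx z hz).trans_eq h'.symm⟩

end Exposed

section Cells

/-- The affine subspace on which the functionals indexed by `S` vanish (possibly empty): the flats
of `𝒜` are the nonempty subspaces of this form. -/
def flatSub (S : Set (Idx 𝒜)) : AffineSubspace ℝ (V n) := ⨅ ℓ ∈ S, zeroLocus ℓ.1

/-- The sign vector of the point `y`, which indexes the face of `𝒜` containing `y`. -/
def signVec (y : V n) : Idx 𝒜 → SignType := fun ℓ => SignType.sign (ℓ.1 y)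

/-- The point set of the unique face of `𝒜` that contains `y`. -/
def cell (y : V n) : Set (V n) := faceSet 𝒜 (signVec 𝒜 y)

/-- The dimension of the unique face of `𝒜` that contains `y`. It is intrinsic to `𝒜`, and so allows
the sets `S_k(cl F)` of all faces `F` to be described by a single function. -/
def dimAt (y : V n) : ℕ := dimS (cell 𝒜 y)

variable {𝒜} {S : Set (Idx 𝒜)} {σ : Idx 𝒜 → SignType} {F : Face 𝒜} {Q : Set (V n)} {x y z : V n}
  {k : ℕ}

lemma mem_flatSub : z ∈ flatSub 𝒜 S ↔ ∀ ℓ ∈ S, ℓ.1 z = 0 := by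
  simp only [← SetLike.mem_coe, flatSub, AffineSubspace.coe_iInf, Set.mem_iInter]
  exact forall₂_congr fun _ _ => mem_zeroLocus

lemma mem_cell_self (y : V n) : y ∈ cell 𝒜 y := fun _ => rfl

lemma faceSet_eq_iInter (σ : Idx 𝒜 → SignType) : faceSet 𝒜 σ = ⋂ ℓ, signSet ℓ.1 (σ ℓ) :=
  Set.ofPred_forall _

lemma convex_faceSet (σ : Idx 𝒜 → SignType) : Convex ℝ (faceSet 𝒜 σ) :=
  faceSet_eq_iInter σ ▸ convex_iInter fun ℓ => convex_signSet ℓ.1 (σ ℓ)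

lemma exists_isOpen_faceSet_eq (σ : Idx 𝒜 → SignType) :
    ∃ U, IsOpen U ∧ faceSet 𝒜 σ = ↑(flatSub 𝒜 {ℓ | σ ℓ = 0}) ∩ U := by
  refine ⟨⋂ ℓ ∈ {ℓ | σ ℓ ≠ 0}, signSet ℓ.1 (σ ℓ),
    (Set.toFinite _).isOpen_biInter fun ℓ hℓ => isOpen_signSet ℓ.1 hℓ, ?_⟩
  ext z
  simp only [Set.mem_inter_iff, SetLike.mem_coe, mem_flatSub, Set.mem_iInter, Set.mem_ofPred_eq]
  refine ⟨fun h => ⟨fun ℓ hℓ => sign_eq_zero_iff.1 ((h ℓ).trans hℓ), fun ℓ _ => h ℓ⟩,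
    fun h ℓ => ?_⟩
  by_cases hℓ : σ ℓ = 0
  · exact (sign_eq_zero_iff.2 (h.1 ℓ hℓ)).trans hℓ.symm
  · exact h.2 ℓ hℓ

lemma dimS_eq_of_faceSet_subset (hσ : (faceSet 𝒜 σ).Nonempty) (h₁ : faceSet 𝒜 σ ⊆ Q)
    (h₂ : Q ⊆ flatSub 𝒜 {ℓ | σ ℓ = 0}) : dimS Q = dimS (faceSet 𝒜 σ) := by
  obtain ⟨U, hU, h⟩ := exists_isOpen_faceSet_eq σ
  rw [h] at hσ h₁
  rw [dimS, dimS, h, vectorSpan_eq_direction_of_inter_subset hU hσ h₁ h₂,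
    vectorSpan_eq_direction_of_inter_subset hU hσ subset_rfl Set.inter_subset_left]

lemma faceSet_subset_intrinsicInterior (h₁ : faceSet 𝒜 σ ⊆ Q)
    (h₂ : Q ⊆ flatSub 𝒜 {ℓ | σ ℓ = 0}) : faceSet 𝒜 σ ⊆ intrinsicInterior ℝ Q := by
  obtain ⟨U, hU, h⟩ := exists_isOpen_faceSet_eq σ
  rw [h] at h₁ ⊢
  exact inter_subset_intrinsicInterior hU h₁ h₂

lemma faceSet_subset_flatSub (σ : Idx 𝒜 → SignType) :
    faceSet 𝒜 σ ⊆ flatSub 𝒜 {ℓ | σ ℓ = 0} :=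
  fun _ hz => mem_flatSub.2 fun ℓ hℓ => sign_eq_zero_iff.1 ((hz ℓ).trans hℓ)

lemma closure_faceSet (hσ : (faceSet 𝒜 σ).Nonempty) :
    closure (faceSet 𝒜 σ) = ⋂ ℓ : Idx 𝒜, weakSignSet ℓ.1 (σ ℓ) := by
  have h := (isRelOpenConvex_coe (⊤ : AffineSubspace ℝ (V n))).closure_inter_iInter_signSet
    (fun ℓ : Idx 𝒜 => ℓ.1) σ
  simp only [AffineSubspace.top_coe, Set.univ_inter, closure_univ, ← faceSet_eq_iInter] at h
  exact h hσ

lemma Face.carrier_nonempty (F : Face 𝒜) : (F.carrier 𝒜).Nonempty :=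
  F.nonempty

lemma Face.convex_closure_carrier (F : Face 𝒜) : Convex ℝ (closure (F.carrier 𝒜)) :=
  (convex_faceSet F.sgn).closure

lemma dimS_closure_carrier (F : Face 𝒜) : dimS (closure (F.carrier 𝒜)) = dimS (F.carrier 𝒜) :=
  dimS_eq_of_faceSet_subset F.nonempty subset_closure <| closure_minimal (faceSet_subset_flatSub _)
    (AffineSubspace.closed_of_finiteDimensional _)

lemma cell_subset_closure_carrier (hy : y ∈ closure (F.carrier 𝒜)) :
    cell 𝒜 y ⊆ closure (F.carrier 𝒜) := by
  intro z hz
  rw [Face.carrier, closure_faceSet F.nonempty, Set.mem_iInter] at hy ⊢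
  exact fun ℓ => (hy ℓ).imp (hz ℓ).trans (hz ℓ).trans

lemma closure_carrier_subset_weakSignSet (F : Face 𝒜) (ℓ : Idx 𝒜) :
    closure (F.carrier 𝒜) ⊆ weakSignSet ℓ.1 (F.sgn ℓ) := by
  rw [Face.carrier, closure_faceSet F.nonempty]
  exact Set.iInter_subset _ ℓ

lemma isExposed_closure_carrier_inter_flatSub (F : Face 𝒜) (S : Set (Idx 𝒜)) :
    IsExposed ℝ (closure (F.carrier 𝒜)) (closure (F.carrier 𝒜) ∩ flatSub 𝒜 S) := by
  induction S, S.toFinite using Set.Finite.induction_on with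
  | empty =>
    simpa [flatSub] using IsExposed.refl (closure (F.carrier 𝒜))
  | @insert ℓ S _ _ ih =>
    have hinsert : (flatSub 𝒜 (insert ℓ S) : Set (V n)) = ↑(zeroLocus ℓ.1) ∩ ↑(flatSub 𝒜 S) := by
      rw [flatSub, _root_.iInf_insert]
      rfl
    rw [hinsert, Set.inter_inter_distrib_left]
    exact (isExposed_inter_zeroLocus_of_subset_weakSignSet
      (closure_carrier_subset_weakSignSet F ℓ)).inter ih

lemma cell_subset_of_isExposed (hy : y ∈ intrinsicInterior ℝ Q)
    (hQ : IsExposed ℝ (closure (F.carrier 𝒜)) Q) : cell 𝒜 y ⊆ Q := by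
  intro z hz
  have hyQ : y ∈ Q := intrinsicInterior_subset hy
  have hcell := cell_subset_closure_carrier (hQ.subset hyQ)
  obtain ⟨w, hw, hyzw⟩ := exists_mem_openSegment_of_mem_intrinsicInterior
    (faceSet_subset_intrinsicInterior subset_rfl (faceSet_subset_flatSub _) (mem_cell_self y)) hz
  exact hQ.isExtreme.left_mem_of_mem_openSegment (hcell hz) (hcell hw) hyQ hyzw

lemma subset_flatSub_of_mem_intrinsicInterior (hy : y ∈ intrinsicInterior ℝ Q)
    (hQ : Q ⊆ closure (F.carrier 𝒜)) : Q ⊆ flatSub 𝒜 {ℓ | signVec 𝒜 y ℓ = 0} := by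
  refine fun z hz => mem_flatSub.2 fun ℓ hℓ => ?_
  obtain ⟨w, hw, hyzw⟩ := exists_mem_openSegment_of_mem_intrinsicInterior hy hz
  have hzs := closure_carrier_subset_weakSignSet F ℓ (hQ hz)
  have hws := closure_carrier_subset_weakSignSet F ℓ (hQ hw)
  have hneg : SignType.sign (ℓ.1 w) = -SignType.sign (ℓ.1 z) :=
    mem_signSet_neg_of_mem_openSegment (sign_eq_zero_iff.1 hℓ) hyzw rfl
  simp only [weakSignSet, Set.mem_ofPred_eq, hneg] at hzs hws
  rw [← sign_eq_zero_iff]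
  generalize SignType.sign (ℓ.1 z) = s at hzs hws ⊢
  generalize F.sgn ℓ = t at hzs hws
  decide +revert

lemma exists_isPolyFace_iff_dimAt_eq (hy : y ∈ closure (F.carrier 𝒜)) :
    (∃ Q, IsPolyFace (closure (F.carrier 𝒜)) Q ∧ dimS Q = k ∧ y ∈ intrinsicInterior ℝ Q)
      ↔ dimAt 𝒜 y = k := by
  constructor
  · rintro ⟨Q, hQ, rfl, hyQ⟩
    have hQ := (isPolyFace_iff_isExposed ⟨y, intrinsicInterior_subset hyQ⟩).1 hQ
    exact (dimS_eq_of_faceSet_subset ⟨y, mem_cell_self y⟩ (cell_subset_of_isExposed hyQ hQ)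
      (subset_flatSub_of_mem_intrinsicInterior hyQ hQ.subset)).symm
  · rintro rfl
    have hcell : cell 𝒜 y ⊆ closure (F.carrier 𝒜) ∩ flatSub 𝒜 {ℓ | signVec 𝒜 y ℓ = 0} :=
      Set.subset_inter (cell_subset_closure_carrier hy) (faceSet_subset_flatSub _)
    exact ⟨_, (isPolyFace_iff_isExposed ⟨y, hcell (mem_cell_self y)⟩).2
        (isExposed_closure_carrier_inter_flatSub F _),
      dimS_eq_of_faceSet_subset ⟨y, mem_cell_self y⟩ hcell Set.inter_subset_right,
      faceSet_subset_intrinsicInterior hcell Set.inter_subset_right (mem_cell_self y)⟩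

lemma projSet_closure_carrier (F : Face 𝒜) (k : ℕ) :
    projSet (closure (F.carrier 𝒜)) k
      = nearestPt (closure (F.carrier 𝒜)) ⁻¹' {y | dimAt 𝒜 y = k} := by
  ext x
  have hnear := isNearest_nearestPt isClosed_closure F.carrier_nonempty.closure x
  constructor
  · rintro ⟨y, hy, hQ⟩
    rw [Set.mem_preimage, IsNearest.nearestPt_eq F.convex_closure_carrier hy]
    exact (exists_isPolyFace_iff_dimAt_eq hy.1).1 hQ
  · exact fun h => ⟨_, hnear, (exists_isPolyFace_iff_dimAt_eq hnear.1).2 h⟩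

lemma measurableSet_faceSet (σ : Idx 𝒜 → SignType) : MeasurableSet (faceSet 𝒜 σ) := by
  obtain ⟨U, hU, h⟩ := exists_isOpen_faceSet_eq σ
  rw [h]
  exact (flatSub 𝒜 _).closed_of_finiteDimensional.measurableSet.inter hU.measurableSet

lemma measurableSet_setOf_dimAt_eq (k : ℕ) : MeasurableSet {y | dimAt 𝒜 y = k} := by
  have h : {y | dimAt 𝒜 y = k} = ⋃ σ ∈ {σ | dimS (faceSet 𝒜 σ) = k}, faceSet 𝒜 σ := by
    ext y
    simp only [Set.mem_iUnion₂]
    refine ⟨fun hy => ⟨signVec 𝒜 y, hy, mem_cell_self y⟩, ?_⟩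
    rintro ⟨σ, hσ, hy⟩
    obtain rfl : signVec 𝒜 y = σ := funext hy
    exact hσ
  rw [h]
  exact .biUnion (Set.to_countable _) fun σ _ => measurableSet_faceSet σ

lemma measurableSet_projSet_closure_carrier (F : Face 𝒜) (k : ℕ) :
    MeasurableSet (projSet (closure (F.carrier 𝒜)) k) := by
  rw [projSet_closure_carrier]
  exact (continuous_nearestPt F.convex_closure_carrier isClosed_closure
    F.carrier_nonempty.closure).measurable (measurableSet_setOf_dimAt_eq k)

end Cells

section IntrinsicVolumes

variable {n : ℕ} {P Q : Set (V n)} {k : ℕ}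

lemma dimS_mono (h : P ⊆ Q) : dimS P ≤ dimS Q :=
  Submodule.finrank_mono (vectorSpan_mono ℝ h)

lemma dimS_le (P : Set (V n)) : dimS P ≤ n :=
  (Submodule.finrank_le _).trans_eq finrank_euclideanSpace_fin

lemma IsPolyFace.subset (h : IsPolyFace P Q) : Q ⊆ P := by
  rcases h with rfl | ⟨-, ℓ, -, rfl⟩
  · exact subset_rfl
  · exact Set.sep_subset _ _

lemma projSet_eq_empty_of_dimS_lt (hk : dimS P < k) : projSet P k = ∅ := by
  refine Set.eq_empty_of_forall_notMem ?_
  rintro x ⟨y, -, Q, hQ, rfl, -⟩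
  exact hk.not_ge (dimS_mono hQ.subset)

lemma HasIntrinsicVolumes.eq_zero_of_dimS_lt {v : ℕ → ℝ} (hv : HasIntrinsicVolumes P v)
    (hk : dimS P < k) : v k = 0 := by
  have h := hv k
  simp only [projSet_eq_empty_of_dimS_lt hk, Set.empty_inter, measure_empty,
    ENNReal.toReal_zero, zero_div] at h
  exact tendsto_nhds_unique h tendsto_const_nhds

lemma HasIntrinsicVolumes.sum_Icc_dimS {v : ℕ → ℝ} (hv : HasIntrinsicVolumes P v) (d : ℕ)
    (c : ℕ → ℝ) : ∑ k ∈ Finset.Icc d (dimS P), c k * v k = ∑ k ∈ Finset.Icc d n, c k * v k := by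
  refine Finset.sum_subset (Finset.Icc_subset_Icc_right (dimS_le P)) fun k hk hk' => ?_
  have hlt : dimS P < k :=
    not_le.1 fun hle => hk' (Finset.mem_Icc.2 ⟨(Finset.mem_Icc.1 hk).1, hle⟩)
  rw [hv.eq_zero_of_dimS_lt hlt, mul_zero]

lemma sum_mul_measureReal_of_ae_eq {Ω ι : Type*} [MeasurableSpace Ω] {μ : Measure Ω}
    [IsFiniteMeasure μ] {s : Finset ι} {A : ι → Set Ω} {c : ι → ℝ} {b : ℝ}
    (hA : ∀ i ∈ s, MeasurableSet (A i))
    (h : ∀ᵐ x ∂μ, ∑ i ∈ s, c i * (A i).indicator 1 x = b) :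
    ∑ i ∈ s, c i * μ.real (A i) = b * μ.real Set.univ := by
  calc ∑ i ∈ s, c i * μ.real (A i)
      = ∑ i ∈ s, ∫ x, c i * (A i).indicator 1 x ∂μ :=
        Finset.sum_congr rfl fun i hi => by
          rw [integral_const_mul, integral_indicator_one (hA i hi)]
    _ = ∫ x, ∑ i ∈ s, c i * (A i).indicator 1 x ∂μ :=
        (integral_finsetSum s fun i hi =>
          ((integrable_const (1 : ℝ)).indicator (hA i hi)).const_mul (c i)).symm
    _ = b * μ.real Set.univ := by
        rw [integral_congr_ae h, integral_const, smul_eq_mul, mul_comm]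

lemma HasIntrinsicVolumes.sum_mul_of_ae_eq {ι : Type*} {s : Finset ι} {P : ι → Set (V n)}
    {v : ι → ℕ → ℝ} {c : ι → ℝ} {b : ℝ} (hv : ∀ i ∈ s, HasIntrinsicVolumes (P i) (v i))
    (hP : ∀ i ∈ s, MeasurableSet (projSet (P i) k))
    (h : ∀ᵐ x : V n, ∑ i ∈ s, c i * (projSet (P i) k).indicator 1 x = b) :
    ∑ i ∈ s, c i * v i k = b := by
  refine tendsto_nhds_unique (tendsto_finsetSum s fun i hi => (hv i hi k).const_mul (c i)) ?_
  refine tendsto_const_nhds.congr' ?_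
  filter_upwards [Filter.eventually_gt_atTop 0] with R hR
  have : IsFiniteMeasure (volume.restrict (Metric.ball (0 : V n) R)) :=
    ⟨by simpa using measure_ball_lt_top⟩
  have hball : (volume (Metric.ball (0 : V n) R)).toReal ≠ 0 :=
    (ENNReal.toReal_pos (Metric.measure_ball_pos volume 0 hR).ne' measure_ball_lt_top.ne).ne'
  have hsum := sum_mul_measureReal_of_ae_eq hP (ae_restrict_of_ae h)
    (μ := volume.restrict (Metric.ball (0 : V n) R))
  rw [measureReal_restrict_apply_univ] at hsum
  simp only [← mul_div_assoc, ← Finset.sum_div]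
  rw [eq_div_iff hball, ← Measure.real_def, ← hsum]
  exact Finset.sum_congr rfl fun i hi => by
    rw [measureReal_restrict_apply (hP i hi), Measure.real_def]

end IntrinsicVolumes

section Generic

lemma nearestPt_coe_eq_orthogonalProjection {E : Type*} [NormedAddCommGroup E]
    [InnerProductSpace ℝ E] (A : AffineSubspace ℝ E) [Nonempty A]
    [A.direction.HasOrthogonalProjection] (x : E) :
    nearestPt (A : Set E) x = EuclideanGeometry.orthogonalProjection A x := by
  refine IsNearest.nearestPt_eq A.convex ⟨EuclideanGeometry.orthogonalProjection_mem x, ?_⟩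
  intro z hz
  rw [EuclideanGeometry.dist_orthogonalProjection_eq_infDist]
  exact Metric.infDist_le_dist_of_mem hz

lemma ae_nearestPt_notMem {E : Type*} [NormedAddCommGroup E] [InnerProductSpace ℝ E]
    [FiniteDimensional ℝ E] [MeasurableSpace E] [BorelSpace E] (μ : Measure E) [μ.IsAddHaarMeasure]
    {A B : AffineSubspace ℝ E} (h : ¬A ≤ B) : ∀ᵐ x ∂μ, nearestPt (A : Set E) x ∉ B := by
  obtain ⟨y, hyA, hyB⟩ := Set.not_subset.1 h
  have : Nonempty A := ⟨⟨y, hyA⟩⟩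
  let π : E →ᵃ[ℝ] E := A.subtype.comp (EuclideanGeometry.orthogonalProjection A : E →ᵃ[ℝ] A)
  have hπ (x : E) : π x = nearestPt (A : Set E) x :=
    (nearestPt_coe_eq_orthogonalProjection A x).symm
  have hy : π y = y := EuclideanGeometry.orthogonalProjection_eq_self_iff.2 hyA
  have hne : B.comap π ≠ ⊤ := fun htop => hyB <| by
    simpa [hy] using htop.ge (AffineSubspace.mem_top ℝ E y)
  refine (measure_eq_zero_iff_ae_notMem.1 (Measure.addHaar_affineSubspace μ _ hne)).mono ?_
  exact fun x hx => by simpa [hπ] using hx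

end Generic

section Flats

variable {𝒜} {X : Flat 𝒜} {F : Face 𝒜} {y z : V n}

lemma Flat.coe_eq_flatSub (X : Flat 𝒜) : X.1 = flatSub 𝒜 {ℓ | X.1 ⊆ hypSet ℓ.1} := by
  ext z
  rw [SetLike.mem_coe, mem_flatSub, flat_eq_inter 𝒜 X, Set.mem_iInter₂, ← flat_eq_inter 𝒜 X]
  rfl

lemma Flat.isClosed (X : Flat 𝒜) : IsClosed X.1 :=
  X.coe_eq_flatSub ▸ AffineSubspace.closed_of_finiteDimensional _

lemma Flat.mem_of_forall_eq_zero (hy : y ∈ X.1) (h : ∀ ℓ : Idx 𝒜, ℓ.1 y = 0 → ℓ.1 z = 0) :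
    z ∈ X.1 := by
  rw [X.coe_eq_flatSub, SetLike.mem_coe, mem_flatSub]
  exact fun ℓ hℓ => h ℓ (hℓ hy)

lemma Face.carrier_subset_supp (F : Face 𝒜) : F.carrier 𝒜 ⊆ (supp 𝒜 F).1 := by
  intro z hz
  simp only [supp, Set.mem_iInter]
  exact fun ℓ hℓ => sign_eq_zero_iff.1 ((hz ℓ).trans hℓ)

lemma Face.supp_subset_of_mem (hyF : y ∈ F.carrier 𝒜) (hyX : y ∈ X.1) :
    (supp 𝒜 F).1 ⊆ X.1 := by
  intro z hz
  simp only [supp, Set.mem_iInter] at hz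
  exact Flat.mem_of_forall_eq_zero hyX fun ℓ hℓ =>
    hz ℓ ((hyF ℓ).symm.trans (sign_eq_zero_iff.2 hℓ))

open Classical in
/-- The faces contained in the flat `X`, which index the sums in `IsCharacteristic`. -/
def facesIn (X : Flat 𝒜) : Finset (Face 𝒜) := Finset.univ.filter fun F => (supp 𝒜 F).1 ⊆ X.1

lemma mem_facesIn : F ∈ facesIn X ↔ (supp 𝒜 F).1 ⊆ X.1 := by
  simp only [facesIn, Finset.mem_filter_univ]

lemma sum_facesIn_signedProj {R : Type*} [CommRing R] (X : Flat 𝒜) (f : V n → R) (x : V n) :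
    ∑ F ∈ facesIn X, signedProj f x (F.carrier 𝒜) = signedProj f x X.1 := by
  classical
  have hX : IsRelOpenConvex X.1 := X.coe_eq_flatSub ▸ isRelOpenConvex_coe _
  rw [hX.signedProj_eq_sum_iInter_signSet (fun ℓ : Idx 𝒜 => ℓ.1)]
  refine Finset.sum_of_injOn Face.sgn (fun F _ G _ => Face.ext) (fun _ _ => Finset.mem_univ _)
    (fun σ _ hσ => ?_) fun F hF => ?_
  · have hempty : X.1 ∩ ⋂ ℓ : Idx 𝒜, signSet ℓ.1 (σ ℓ) = ∅ := by
      refine Set.eq_empty_of_forall_notMem fun y ⟨hyX, hyσ⟩ => hσ ?_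
      rw [← faceSet_eq_iInter] at hyσ
      exact ⟨⟨σ, y, hyσ⟩, mem_facesIn.2 (Face.supp_subset_of_mem hyσ hyX), rfl⟩
    rw [hempty, signedProj_empty]
  · rw [← faceSet_eq_iInter]
    congr 1
    exact (Set.inter_eq_right.2 (F.carrier_subset_supp.trans (mem_facesIn.1 hF))).symm

lemma Flat.dimAt_eq_dimS (hy : y ∈ X.1) (h : ∀ ℓ : Idx 𝒜, ℓ.1 y = 0 → X.1 ⊆ hypSet ℓ.1) :
    dimAt 𝒜 y = dimS X.1 := by
  refine (dimS_eq_of_faceSet_subset ⟨y, mem_cell_self y⟩ (fun z hz => ?_) fun z hz => ?_).symm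
  · exact mem_of_forall_eq_zero hy fun ℓ hℓ =>
      sign_eq_zero_iff.1 ((hz ℓ).trans (sign_eq_zero_iff.2 hℓ))
  · exact mem_flatSub.2 fun ℓ hℓ => h ℓ (sign_eq_zero_iff.1 hℓ) hz

lemma Flat.ae_dimAt_nearestPt (X : Flat 𝒜) : ∀ᵐ x : V n, dimAt 𝒜 (nearestPt X.1 x) = dimS X.1 := by
  have hX := X.coe_eq_flatSub
  have hgen (ℓ : Idx 𝒜) (hℓ : ¬X.1 ⊆ hypSet ℓ.1) : ∀ᵐ x : V n, ℓ.1 (nearestPt X.1 x) ≠ 0 := by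
    rw [hX] at hℓ ⊢
    exact (ae_nearestPt_notMem volume fun hle => hℓ fun z hz => mem_zeroLocus.1 (hle hz)).mono
      fun x hx h0 => hx (mem_zeroLocus.2 h0)
  filter_upwards [ae_all_iff.2 fun ℓ => Filter.eventually_imp_distrib_left.2 (hgen ℓ)] with x hx
  exact dimAt_eq_dimS (nearestPt_mem X.isClosed X.2.1 x) fun ℓ hℓ =>
    not_not.1 fun hn => hx ℓ hn hℓ

lemma Flat.le_dimS {d : ℕ} (hd : ∀ X : Flat 𝒜, IsMin X → dimS X.1 = d) (X : Flat 𝒜) :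
    d ≤ dimS X.1 := by
  obtain ⟨Y, hYX, hY⟩ := (Set.toFinite (Set.univ : Set (Flat 𝒜))).exists_le_minimal
    (Set.mem_univ X)
  exact hd Y (minimal_true.1 hY) ▸ dimS_mono hYX

end Flats

section Characteristic

variable {𝒜} {v : Face 𝒜 → ℕ → ℝ}

lemma signedProj_carrier (F : Face 𝒜) (k : ℕ) (x : V n) :
    signedProj ({y | dimAt 𝒜 y = k}.indicator (1 : V n → ℝ)) x (F.carrier 𝒜)
      = (-1) ^ dimS (F.carrier 𝒜) * (projSet (closure (F.carrier 𝒜)) k).indicator 1 x := by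
  rw [signedProj_of_nonempty _ _ F.carrier_nonempty, projSet_closure_carrier]
  rfl

lemma ae_signedProj_flat (X : Flat 𝒜) (k : ℕ) :
    ∀ᵐ x : V n, signedProj ({y | dimAt 𝒜 y = k}.indicator (1 : V n → ℝ)) x X.1
      = (-1) ^ dimS X.1 * if dimS X.1 = k then 1 else 0 := by
  filter_upwards [X.ae_dimAt_nearestPt] with x hx
  rw [signedProj_of_nonempty _ _ X.2.1, X.isClosed.closure_eq]
  simp only [Set.indicator_apply, Set.mem_ofPred_eq, hx, Pi.one_apply]
  rfl

lemma sum_facesIn_intrinsicVolume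
    (hv : ∀ F : Face 𝒜, HasIntrinsicVolumes (closure (F.carrier 𝒜)) (v F)) (X : Flat 𝒜) (k : ℕ) :
    ∑ F ∈ facesIn X, (-1) ^ dimS (F.carrier 𝒜) * v F k
      = (-1) ^ dimS X.1 * if dimS X.1 = k then 1 else 0 := by
  refine HasIntrinsicVolumes.sum_mul_of_ae_eq (fun F _ => hv F)
    (fun F _ => measurableSet_projSet_closure_carrier F k) ?_
  filter_upwards [ae_signedProj_flat X k] with x hx
  rw [← hx, ← sum_facesIn_signedProj]
  exact Finset.sum_congr rfl fun F _ => (signedProj_carrier F k x).symm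

end Characteristic

/-- **Theorem (the intrinsic element is characteristic).**
The element `ν_t = Σ_F (-1)^{dim F} (Σ_{k=d}^{dim F} (-1)^k v_k(cl F) t^{k-d}) H_F`
is characteristic of parameter `t`. -/
theorem intrinsic_isCharacteristic {n : ℕ} (𝒜 : Finset (AffForm n))
    (h𝒜 : ∀ ℓ ∈ 𝒜, ℓ.linear ≠ 0)
    (d : ℕ) (hd : ∀ X : Flat 𝒜, IsMin X → dimS X.1 = d)
    (v : Face 𝒜 → ℕ → ℝ)
    (hv : ∀ F : Face 𝒜, HasIntrinsicVolumes (closure (Face.carrier 𝒜 F)) (v F))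
    (t : ℝ) :
    IsCharacteristic 𝒜 d
      (fun F => (-1 : ℝ) ^ (dimS (Face.carrier 𝒜 F)) *
        ∑ k ∈ Finset.Icc d (dimS (Face.carrier 𝒜 F)),
          (-1 : ℝ) ^ k * v F k * t ^ (k - d)) t := by
  intro X
  have hX : dimS X.1 ∈ Finset.Icc d n := Finset.mem_Icc.2 ⟨X.le_dimS hd, dimS_le X.1⟩
  rw [← Finset.sum_filter]
  calc ∑ F ∈ facesIn X, (-1) ^ dimS (F.carrier 𝒜) *
        ∑ k ∈ Finset.Icc d (dimS (F.carrier 𝒜)), (-1) ^ k * v F k * t ^ (k - d)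
      = ∑ F ∈ facesIn X, (-1) ^ dimS (F.carrier 𝒜) *
          ∑ k ∈ Finset.Icc d n, (-1) ^ k * v F k * t ^ (k - d) :=
        Finset.sum_congr rfl fun F _ => by
          simp only [mul_right_comm _ (v F _), ← dimS_closure_carrier F, (hv F).sum_Icc_dimS]
    _ = ∑ k ∈ Finset.Icc d n, (-1) ^ k * t ^ (k - d) *
          ∑ F ∈ facesIn X, (-1) ^ dimS (F.carrier 𝒜) * v F k := by
        simp only [Finset.mul_sum]
        rw [Finset.sum_comm]
        exact Finset.sum_congr rfl fun k _ => Finset.sum_congr rfl fun F _ => by ring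
    _ = ∑ k ∈ Finset.Icc d n, if dimS X.1 = k then
          (-1) ^ k * t ^ (k - d) * (-1) ^ dimS X.1 else 0 := by
        simp only [sum_facesIn_intrinsicVolume hv, mul_ite, mul_one, mul_zero]
    _ = t ^ (dimS X.1 - d) := by
        rw [Finset.sum_ite_eq, if_pos hX, mul_right_comm, ← mul_pow, neg_one_mul, neg_neg, one_pow,
          one_mul]

end CharElts
end
end
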